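/- Let Q be a stationary ergodic probability measure on Ω = {1,...,D}^ℤ and let k ≥ 0. Then Q-almost surely lim_{n→∞} [ B(X_{n+1}|X_1^n, k) − Q(X_{n+1} | X_{n+1−k}^{n}) ] = 0, where Q(X_{n+1}|X_{n+1−k}^{n}) denotes the ratio Q(X_{n+1−k}^{n+1})/Q(X_{n+1−k}^{n}) of cylinder probabilities evaluated at the sample path (which is Q-almost surely well defined). -/

import Mathlib

open Filter MeasureTheory
open scoped Topology

/-- Number of occurrences `c(w|z)` of `w` as a substring of `z`. -/
def cnt {D : ℕ} (w z : List (Fin D)) : ℕ :=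
  ((List.range (z.length - w.length + 1)).filter
    (fun i => (z.drop i).take w.length = w)).length

/-- Count `c(w | z_1^{m-1})` of `w` in the string `z` with its last symbol removed,
with the convention that counting in a block of length `-1` (i.e. when `z` itself is
empty) gives `0`. -/
def cntPred {D : ℕ} (w z : List (Fin D)) : ℕ :=
  if z = [] then 0 else cnt w z.dropLast

/-- The prefix `x_1^n` of the one-sided sequence `x` (0-indexed: `x i = x_{i+1}`). -/
def pref {D : ℕ} (x : ℕ → Fin D) (n : ℕ) : List (Fin D) :=
  (List.range n).map x

/-- Adaptive Markov predictor: the natural-number index corresponds to the Markov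
order shifted by one, so `Bpred D xs a (k+1) = B(a | xs, k)` and
`Bpred D xs a 0 = B(a | xs, -1) = 1/D`, where
`B(x_{n+1}|x_1^n, k) = (c(x_{n+1-k}^{n+1}|x_1^n) + B(x_{n+1}|x_1^n, k-1)) /
(c(x_{n+1-k}^{n}|x_1^{n-1}) + 1)`.  Counts of substrings whose indices fall outside
the string are taken to be zero. -/
noncomputable def Bpred (D : ℕ) (xs : List (Fin D)) (a : Fin D) : ℕ → ℝ
  | 0 => 1 / D
  | k + 1 =>
    if k ≤ xs.length then
      ((cnt (xs.drop (xs.length - k) ++ [a]) xs : ℝ) + Bpred D xs a k) /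
      ((cntPred (xs.drop (xs.length - k)) xs : ℝ) + 1)
    else Bpred D xs a k

/-- The two-sided sequence space `Ω = {1,...,D}^ℤ` with the product σ-algebra. -/
abbrev Omega (D : ℕ) := ℤ → Fin D

/-- The shift `T : Ω → Ω`. -/
def shiftT (D : ℕ) : Omega D → Omega D := fun ω i => ω (i + 1)

/-- The cylinder set `{X_1 = x 0, ..., X_n = x (n-1)}`. -/
def cylSet (D : ℕ) (x : ℕ → Fin D) (n : ℕ) : Set (Omega D) :=
  {ω | ∀ i < n, ω ((i : ℤ) + 1) = x i}

/-- The one-sided sample path `X_1, X_2, ...` of `ω` (0-indexed). -/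
def path (D : ℕ) (ω : Omega D) : ℕ → Fin D := fun i => ω ((i : ℤ) + 1)

/-- The cylinder probability `Q(x_1^n)`. -/
noncomputable def Qstr (D : ℕ) (Q : Measure (Omega D)) (x : ℕ → Fin D) (n : ℕ) : ℝ :=
  (Q (cylSet D x n)).toReal

/-!
By Birkhoff's ergodic theorem, almost surely the number of occurrences in `X_1^n` of any fixed
word, divided by `n`, tends to the cylinder probability of that word. Hence, along the times at
which the last `k + 1` symbols spell a fixed word `wa` with `Q(w) > 0`, the predictor, a quotient
of the counts of `wa` and `w` perturbed by terms in `[0, 1]`, tends to `Q(wa)/Q(w)`; contexts `w`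
with `Q(w) = 0` almost surely never occur. Since there are only finitely many words of length
`k + 1`, this gives the limit along all times.
-/

section BirkhoffErgodicTheorem

variable {α : Type*} {T : α → α} {f : α → ℝ}

/-- The maximal Birkhoff sum `max_{j ≤ n} S_j f (x)`. It is nonnegative, because the empty sum
`S_0 f = 0` takes part in the maximum. -/
noncomputable def maxBirkhoffSum (T : α → α) (f : α → ℝ) (n : ℕ) (x : α) : ℝ :=
  partialSups (fun j => birkhoffSum T f j x) n

lemma maxBirkhoffSum_zero (T : α → α) (f : α → ℝ) (x : α) : maxBirkhoffSum T f 0 x = 0 := by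
  simp [maxBirkhoffSum]

lemma maxBirkhoffSum_succ (T : α → α) (f : α → ℝ) (n : ℕ) (x : α) :
    maxBirkhoffSum T f (n + 1) x = max (maxBirkhoffSum T f n x) (birkhoffSum T f (n + 1) x) :=
  partialSups_succ (fun j => birkhoffSum T f j x) n

lemma monotone_maxBirkhoffSum (T : α → α) (f : α → ℝ) (x : α) :
    Monotone fun n => maxBirkhoffSum T f n x :=
  partialSups_monotone _

lemma maxBirkhoffSum_nonneg (T : α → α) (f : α → ℝ) (n : ℕ) (x : α) :
    0 ≤ maxBirkhoffSum T f n x :=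
  (maxBirkhoffSum_zero T f x).symm.le.trans (monotone_maxBirkhoffSum T f x n.zero_le)

lemma maxBirkhoffSum_succ' (T : α → α) (f : α → ℝ) (n : ℕ) (x : α) :
    maxBirkhoffSum T f (n + 1) x = max 0 (f x + maxBirkhoffSum T f n (T x)) := by
  induction n with
  | zero => simp [maxBirkhoffSum_succ, maxBirkhoffSum_zero]
  | succ n ih =>
    rw [maxBirkhoffSum_succ, ih, maxBirkhoffSum_succ T f n (T x), birkhoffSum_succ' T f (n + 1),
      max_assoc, max_add_add_left]

lemma maxBirkhoffSum_succ_sub (T : α → α) (f : α → ℝ) (n : ℕ) (x : α) :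
    maxBirkhoffSum T f (n + 1) x - maxBirkhoffSum T f n (T x) =
      max (-maxBirkhoffSum T f n (T x)) (f x) := by
  rw [maxBirkhoffSum_succ', ← max_sub_sub_right, zero_sub, add_sub_cancel_right]

lemma abs_maxBirkhoffSum_succ_sub_le (T : α → α) (f : α → ℝ) (n : ℕ) (x : α) :
    |maxBirkhoffSum T f (n + 1) x - maxBirkhoffSum T f n (T x)| ≤ |f x| := by
  have hnonneg := maxBirkhoffSum_nonneg T f n (T x)
  rw [maxBirkhoffSum_succ_sub, abs_le]
  exact ⟨(neg_abs_le _).trans (le_max_right _ _),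
    max_le ((neg_nonpos.2 hnonneg).trans (abs_nonneg _)) (le_abs_self _)⟩

lemma bddAbove_range_birkhoffSum_apply_iff (T : α → α) (f : α → ℝ) (x : α) :
    BddAbove (Set.range fun n => birkhoffSum T f n (T x)) ↔
      BddAbove (Set.range fun n => birkhoffSum T f n x) := by
  simp only [bddAbove_def, Set.forall_mem_range]
  constructor
  · rintro ⟨B, hB⟩
    refine ⟨max 0 (f x + B), fun n => ?_⟩
    cases n with
    | zero => simp
    | succ n =>
      rw [birkhoffSum_succ']
      exact le_max_of_le_right (by gcongr; exact hB n)
  · rintro ⟨B, hB⟩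
    refine ⟨B - f x, fun n => ?_⟩
    have hsucc := hB (n + 1)
    rw [birkhoffSum_succ'] at hsucc
    linarith

lemma tendsto_maxBirkhoffSum_succ_sub {x : α}
    (hx : ¬BddAbove (Set.range fun n => birkhoffSum T f n x)) :
    Tendsto (fun n => maxBirkhoffSum T f (n + 1) x - maxBirkhoffSum T f n (T x)) atTop
      (𝓝 (f x)) := by
  have hTx : ¬BddAbove (Set.range fun n => maxBirkhoffSum T f n (T x)) := fun h =>
    hx ((bddAbove_range_birkhoffSum_apply_iff T f x).1 (bddAbove_range_partialSups.1 h))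
  have hatTop := tendsto_atTop_atTop_of_monotone' (monotone_maxBirkhoffSum T f (T x)) hTx
  refine tendsto_const_nhds.congr' ?_
  filter_upwards [hatTop.eventually_ge_atTop (-f x)] with n hn
  rw [maxBirkhoffSum_succ_sub, max_eq_right (neg_le.1 hn)]

lemma eventually_birkhoffAverage_lt_of_bddAbove {c d : ℝ} {x : α} (hcd : c < d)
    (hx : BddAbove (Set.range fun n => birkhoffSum T (fun y => f y - c) n x)) :
    ∀ᶠ n in atTop, birkhoffAverage ℝ T f n x < d := by
  obtain ⟨B, hB⟩ := hx
  filter_upwards [(tendsto_const_div_atTop_nhds_zero_nat B).eventually_lt_const (sub_pos.2 hcd),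
    eventually_gt_atTop 0] with n hn hpos
  have hn' : (0 : ℝ) < n := Nat.cast_pos.2 hpos
  have hsum : birkhoffSum T f n x - n * c ≤ B := by
    simpa [birkhoffSum] using hB ⟨n, rfl⟩
  rw [div_lt_iff₀ hn'] at hn
  rw [birkhoffAverage, smul_eq_mul, inv_mul_eq_div, div_lt_iff₀ hn']
  linarith

variable [MeasurableSpace α] {μ : Measure α}

lemma integrable_birkhoffSum (hT : MeasurePreserving T μ μ) (hf : Integrable f μ) (n : ℕ) :
    Integrable (birkhoffSum T f n) μ :=
  integrable_finsetSum _ fun j _ => (hT.iterate j).integrable_comp_of_integrable hf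

lemma integrable_maxBirkhoffSum (hT : MeasurePreserving T μ μ) (hf : Integrable f μ) (n : ℕ) :
    Integrable (maxBirkhoffSum T f n) μ := by
  induction n with
  | zero =>
    rw [funext (maxBirkhoffSum_zero T f)]
    exact integrable_zero α ℝ μ
  | succ n ih =>
    rw [funext (maxBirkhoffSum_succ T f n)]
    exact ih.sup (integrable_birkhoffSum hT hf (n + 1))

lemma integral_maxBirkhoffSum_succ_sub_nonneg (hT : MeasurePreserving T μ μ)
    (hf : Integrable f μ) (n : ℕ) :
    0 ≤ ∫ x, (maxBirkhoffSum T f (n + 1) x - maxBirkhoffSum T f n (T x)) ∂μ := by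
  have hint := integrable_maxBirkhoffSum hT hf
  have hintT : Integrable (fun x => maxBirkhoffSum T f n (T x)) μ :=
    hT.integrable_comp_of_integrable (hint n)
  have hcomp : ∫ x, maxBirkhoffSum T f n (T x) ∂μ = ∫ x, maxBirkhoffSum T f n x ∂μ := by
    have hmap := integral_map hT.aemeasurable (f := maxBirkhoffSum T f n)
      (by rw [hT.map_eq]; exact (hint n).aestronglyMeasurable)
    rw [← hmap, hT.map_eq]
  rw [integral_sub (hint _) hintT, hcomp, sub_nonneg]
  exact integral_mono (hint _) (hint _) fun x => monotone_maxBirkhoffSum T f x n.le_succ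

-- The increments `M_{n+1} - M_n ∘ T` have nonnegative integral, are dominated by `|f|`, and
-- converge to `f` where the Birkhoff sums are unbounded.
lemma integral_nonneg_of_ae_not_bddAbove_birkhoffSum (hT : MeasurePreserving T μ μ)
    (hf : Integrable f μ)
    (hunbdd : ∀ᵐ x ∂μ, ¬BddAbove (Set.range fun n => birkhoffSum T f n x)) :
    0 ≤ ∫ x, f x ∂μ := by
  have hint := integrable_maxBirkhoffSum hT hf
  have hlim : Tendsto
      (fun n => ∫ x, (maxBirkhoffSum T f (n + 1) x - maxBirkhoffSum T f n (T x)) ∂μ) atTop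
      (𝓝 (∫ x, f x ∂μ)) :=
    tendsto_integral_of_dominated_convergence (fun x => |f x|)
      (fun n => ((hint _).sub (hT.integrable_comp_of_integrable (hint n))).aestronglyMeasurable)
      hf.abs (fun n => Eventually.of_forall (abs_maxBirkhoffSum_succ_sub_le T f n))
      (hunbdd.mono fun _ => tendsto_maxBirkhoffSum_succ_sub)
  exact ge_of_tendsto' hlim (integral_maxBirkhoffSum_succ_sub_nonneg hT hf)

lemma nullMeasurableSet_bddAbove_range_birkhoffSum
    (hT : Measure.QuasiMeasurePreserving T μ μ) (hf : AEMeasurable f μ) :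
    NullMeasurableSet {x | BddAbove (Set.range fun n => birkhoffSum T f n x)} μ := by
  have hmeas : MeasurableSet {x | BddAbove (Set.range fun n => birkhoffSum T (hf.mk f) n x)} :=
    measurableSet_bddAbove_range fun n => Finset.measurable_sum _ fun j _ =>
      hf.measurable_mk.comp (hT.measurable.iterate j)
  refine hmeas.nullMeasurableSet.congr (eventuallyEq_set.2 ?_)
  filter_upwards [ae_all_iff.2 (hT.birkhoffSum_ae_eq_of_ae_eq hf.ae_eq_mk)] with x hx
  simp only [hx]

lemma ae_bddAbove_range_birkhoffSum (hT : Ergodic T μ) (hf : Integrable f μ)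
    (hneg : ∫ x, f x ∂μ < 0) :
    ∀ᵐ x ∂μ, BddAbove (Set.range fun n => birkhoffSum T f n x) := by
  have hinv : T ⁻¹' {x | BddAbove (Set.range fun n => birkhoffSum T f n x)} =
      {x | BddAbove (Set.range fun n => birkhoffSum T f n x)} :=
    Set.ext (bddAbove_range_birkhoffSum_apply_iff T f)
  have hnull := nullMeasurableSet_bddAbove_range_birkhoffSum
    hT.toMeasurePreserving.quasiMeasurePreserving hf.aemeasurable
  refine (hT.quasiErgodic.ae_mem_or_ae_notMem₀ hnull hinv.eventuallyEq).resolve_right fun h => ?_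
  exact hneg.not_ge (integral_nonneg_of_ae_not_bddAbove_birkhoffSum hT.toMeasurePreserving hf h)

variable [IsProbabilityMeasure μ]

lemma ae_eventually_birkhoffAverage_lt (hT : Ergodic T μ) (hf : Integrable f μ) :
    ∀ᵐ x ∂μ, ∀ d > ∫ y, f y ∂μ, ∀ᶠ n in atTop, birkhoffAverage ℝ T f n x < d := by
  have hbdd : ∀ c : ℚ, ∀ᵐ x ∂μ, ∫ y, f y ∂μ < c →
      BddAbove (Set.range fun n => birkhoffSum T (fun y => f y - c) n x) := fun c => by
    by_cases hc : ∫ y, f y ∂μ < c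
    · have hneg : ∫ y, (f y - c) ∂μ < 0 := by
        rw [integral_sub hf (integrable_const _)]
        simpa using hc
      filter_upwards [ae_bddAbove_range_birkhoffSum hT (hf.sub (integrable_const _)) hneg]
        with x hx _ using hx
    · exact Eventually.of_forall fun _ h => absurd h hc
  filter_upwards [ae_all_iff.2 hbdd] with x hx d hd
  obtain ⟨c, hc, hcd⟩ := exists_rat_btwn hd
  exact eventually_birkhoffAverage_lt_of_bddAbove hcd (hx c hc)

theorem ae_tendsto_birkhoffAverage (hT : Ergodic T μ) (hf : Integrable f μ) :
    ∀ᵐ x ∂μ, Tendsto (fun n => birkhoffAverage ℝ T f n x) atTop (𝓝 (∫ y, f y ∂μ)) := by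
  filter_upwards [ae_eventually_birkhoffAverage_lt hT hf,
    ae_eventually_birkhoffAverage_lt hT hf.neg] with x hupper hlower
  refine tendsto_order.2 ⟨fun d hd => ?_, hupper⟩
  have hneg : ∫ y, (-f) y ∂μ < -d := by
    simpa only [Pi.neg_apply, integral_neg, neg_lt_neg_iff] using hd
  filter_upwards [hlower (-d) hneg] with n hn
  rwa [birkhoffAverage_neg, Pi.neg_apply, Pi.neg_apply, neg_lt_neg_iff] at hn

end BirkhoffErgodicTheorem

section Limits

variable {ι : Type*} {l : Filter ι}

lemma tendsto_of_forall_tendsto_inf_principal_fiber {κ β : Type*} [Finite κ] {l' : Filter β}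
    {a : ι → β} (c : ι → κ) (h : ∀ i, Tendsto a (l ⊓ 𝓟 (c ⁻¹' {i})) l') : Tendsto a l l' := by
  intro s hs
  have hfiber : ∀ i, ∀ᶠ n in l, n ∈ c ⁻¹' {i} → a n ∈ s := fun i =>
    eventually_inf_principal.1 ((h i).eventually_mem hs)
  exact (eventually_all.2 hfiber).mono fun n hn => hn (c n) rfl

lemma tendsto_add_div_add_of_tendsto_div {a b c u v : ι → ℝ} {p q : ℝ} (hp : p ≠ 0)
    (hc : ∀ᶠ i in l, c i ≠ 0)
    (ha : Tendsto (fun i => a i / c i) l (𝓝 q)) (hb : Tendsto (fun i => b i / c i) l (𝓝 p))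
    (hu : Tendsto (fun i => u i / c i) l (𝓝 0)) (hv : Tendsto (fun i => v i / c i) l (𝓝 0)) :
    Tendsto (fun i => (a i + u i) / (b i + v i)) l (𝓝 (q / p)) := by
  have hlim : Tendsto (fun i => (a i / c i + u i / c i) / (b i / c i + v i / c i)) l
      (𝓝 (q / p)) := by
    have hdiv := (ha.add hu).div (hb.add hv) (by simpa using hp)
    rwa [add_zero, add_zero] at hdiv
  refine hlim.congr' ?_
  filter_upwards [hc] with i hi
  rw [← add_div, ← add_div, div_div_div_cancel_right₀ hi]

end Limits

section Words

variable {D : ℕ}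

lemma length_pref (x : ℕ → Fin D) (n : ℕ) : (pref x n).length = n := by
  simp [pref]

lemma pref_succ (x : ℕ → Fin D) (n : ℕ) : pref x (n + 1) = pref x n ++ [x n] := by
  simp [pref, List.range_succ]

lemma drop_pref (x : ℕ → Fin D) (i n : ℕ) :
    (pref x n).drop i = pref (fun j => x (i + j)) (n - i) :=
  List.ext_getElem (by simp [pref]) (by simp [pref])

lemma take_pref (x : ℕ → Fin D) {m n : ℕ} (h : m ≤ n) : (pref x n).take m = pref x m :=
  List.ext_getElem (by simp [pref, h]) (by simp [pref])

lemma pref_eq_pref_iff {x y : ℕ → Fin D} {n : ℕ} : pref x n = pref y n ↔ ∀ i < n, x i = y i := by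
  simp [pref]

lemma cnt_pref_pref (x y : ℕ → Fin D) {m n : ℕ} (h : m ≤ n) :
    cnt (pref y m) (pref x n) = ∑ i ∈ Finset.range (n - m + 1),
      if ∀ j < m, x (i + j) = y j then 1 else 0 := by
  have hmatch : ∀ i ∈ List.range (n - m + 1),
      decide (((pref x n).drop i).take m = pref y m) = decide (∀ j < m, x (i + j) = y j) := by
    intro i hi
    rw [drop_pref, take_pref _ (by grind), decide_eq_decide]
    exact pref_eq_pref_iff
  rw [cnt, length_pref, length_pref, List.filter_congr hmatch, ← Finset.card_filter]
  rfl

lemma take_drop_dropLast_of_take_drop_eq_append_singleton {w z : List (Fin D)} {a : Fin D} {i : ℕ}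
    (h : (z.drop i).take (w.length + 1) = w ++ [a]) :
    (z.dropLast.drop i).take w.length = w := by
  have hlen : w.length + 1 ≤ z.length - i := by
    simpa using congrArg List.length h
  calc (z.dropLast.drop i).take w.length
      = ((z.drop i).take (w.length + 1)).take w.length := by
        rw [List.dropLast_eq_take, List.drop_take, List.take_take, List.take_take]
        congr 1
        omega
    _ = w := by rw [h, List.take_left]

-- Deleting the last letter of an occurrence of `w ++ [a]` in `z` leaves an occurrence of `w`
-- that does not reach the last letter of `z`.
lemma cnt_append_singleton_le_cntPred (w z : List (Fin D)) (a : Fin D) :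
    cnt (w ++ [a]) z ≤ cntPred w z := by
  unfold cntPred
  split_ifs with hz
  · simp [hz, cnt]
  · have hrange : z.length - (w ++ [a]).length + 1 = z.dropLast.length - w.length + 1 := by
      simp only [List.length_append, List.length_singleton, List.length_dropLast]
      omega
    rw [cnt, cnt, hrange, ← List.countP_eq_length_filter, ← List.countP_eq_length_filter]
    refine List.countP_mono_left fun i _ hi => ?_
    rw [decide_eq_true_eq, List.length_append, List.length_singleton] at hi
    exact decide_eq_true (take_drop_dropLast_of_take_drop_eq_append_singleton hi)

lemma Bpred_mem_Icc (xs : List (Fin D)) (a : Fin D) (k : ℕ) :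
    Bpred D xs a k ∈ Set.Icc 0 1 := by
  induction k with
  | zero => exact ⟨by simp [Bpred], by simpa [Bpred] using Nat.cast_inv_le_one D⟩
  | succ k ih =>
    obtain ⟨hnonneg, hle_one⟩ := ih
    rw [Bpred]
    split_ifs with hk
    · refine ⟨by positivity, (div_le_one (by positivity)).2 ?_⟩
      gcongr
      exact cnt_append_singleton_le_cntPred _ xs a
    · exact ⟨hnonneg, hle_one⟩

end Words

section Cylinders

variable {D : ℕ}

lemma iterate_shiftT_apply (ω : Omega D) (n : ℕ) (i : ℤ) :
    (shiftT D)^[n] ω i = ω (i + n) := by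
  induction n generalizing ω with
  | zero => simp
  | succ n ih =>
    rw [Function.iterate_succ_apply, ih, shiftT]
    congr 1
    push_cast
    ring

lemma iterate_shiftT_mem_cylSet_iff {ω : Omega D} {y : ℕ → Fin D} {m n : ℕ} :
    (shiftT D)^[n] ω ∈ cylSet D y m ↔ ∀ j < m, path D ω (n + j) = y j := by
  refine forall₂_congr fun j _ => ?_
  rw [iterate_shiftT_apply, path]
  push_cast
  rw [add_right_comm, add_comm (j : ℤ)]

lemma measurableSet_cylSet (y : ℕ → Fin D) (m : ℕ) : MeasurableSet (cylSet D y m) := by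
  have hcyl : cylSet D y m = ⋂ i, ⋂ _ : i < m, (fun ω : Omega D => ω ((i : ℤ) + 1)) ⁻¹' {y i} := by
    ext ω
    simp [cylSet]
  rw [hcyl]
  exact MeasurableSet.iInter fun i => MeasurableSet.iInter fun _ =>
    measurable_pi_apply _ (measurableSet_singleton _)

lemma Qstr_congr (Q : Measure (Omega D)) {y z : ℕ → Fin D} {m : ℕ} (h : ∀ j < m, y j = z j) :
    Qstr D Q y m = Qstr D Q z m := by
  have hcyl : cylSet D y m = cylSet D z m :=
    Set.ext fun ω => forall₂_congr fun j hj => by rw [h j hj]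
  rw [Qstr, Qstr, hcyl]

/-- The number of times `i < n` at which the orbit of `ω` under the shift visits the cylinder of
`y_0, …, y_{m-1}`, i.e. at which this word occurs in the sample path of `ω`. It is encoded as a
Birkhoff sum. -/
noncomputable def cylVisits (y : ℕ → Fin D) (m n : ℕ) (ω : Omega D) : ℝ :=
  birkhoffSum (shiftT D) ((cylSet D y m).indicator 1) n ω

lemma cnt_pref_path (ω : Omega D) (y : ℕ → Fin D) {m n : ℕ} (h : m ≤ n) :
    (cnt (pref y m) (pref (path D ω) n) : ℝ) = cylVisits y m (n - m + 1) ω := by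
  classical
  rw [cnt_pref_pref _ _ h, cylVisits, birkhoffSum]
  push_cast
  simp only [Set.indicator_apply, iterate_shiftT_mem_cylSet_iff, Pi.one_apply]

lemma ae_tendsto_cylVisits_div {Q : Measure (Omega D)} [IsProbabilityMeasure Q]
    (hQ : Ergodic (shiftT D) Q) (y : ℕ → Fin D) (m : ℕ) :
    ∀ᵐ ω ∂Q, Tendsto (fun n : ℕ => cylVisits y m n ω / n) atTop (𝓝 (Qstr D Q y m)) := by
  have hint : Integrable ((cylSet D y m).indicator (1 : Omega D → ℝ)) Q :=
    (integrable_const 1).indicator (measurableSet_cylSet y m)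
  have herg := ae_tendsto_birkhoffAverage hQ hint
  rw [integral_indicator_one (measurableSet_cylSet y m)] at herg
  simpa only [birkhoffAverage, smul_eq_mul, inv_mul_eq_div, cylVisits, Qstr, Measure.real]
    using herg

/-- The times `n` at which the last `k + 1` symbols `X_{n+1-k}, …, X_{n+1}` of the sample path
spell `y_0, …, y_k`. For `n < k` the subtraction truncates; only large `n` matter. -/
def matchTimes (ω : Omega D) (y : ℕ → Fin D) (k : ℕ) : Set ℕ :=
  {n | ∀ j < k + 1, path D ω (n - k + j) = y j}

lemma Bpred_eq_of_mem_matchTimes {ω : Omega D} {y : ℕ → Fin D} {k n : ℕ} (hk : k < n)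
    (hn : n ∈ matchTimes ω y k) :
    Bpred D (pref (path D ω) n) (path D ω n) (k + 1) =
      (cylVisits y (k + 1) (n - k) ω + Bpred D (pref (path D ω) n) (path D ω n) k) /
        (cylVisits y k (n - k) ω + 1) := by
  obtain ⟨n, rfl⟩ : ∃ r, n = r + 1 := ⟨n - 1, by omega⟩
  have hcontext : (pref (path D ω) (n + 1)).drop (n + 1 - k) = pref y k := by
    rw [drop_pref, Nat.sub_sub_self hk.le]
    exact pref_eq_pref_iff.2 fun j hj => hn j (by omega)
  have hlast : path D ω (n + 1) = y k := by
    rw [← hn k k.lt_succ_self, Nat.sub_add_cancel hk.le]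
  have hpred : cntPred (pref y k) (pref (path D ω) (n + 1)) =
      cnt (pref y k) (pref (path D ω) n) := by
    simp [cntPred, pref_succ]
  rw [Bpred, length_pref, if_pos hk.le, hcontext, hpred, hlast, ← pref_succ, cnt_pref_path _ _ hk,
    cnt_pref_path _ _ (by omega), show n + 1 - (k + 1) + 1 = n + 1 - k by omega,
    show n - k + 1 = n + 1 - k by omega]

lemma tendsto_Bpred_inf_principal_matchTimes {ω : Omega D} {y : ℕ → Fin D} {k : ℕ} {p q : ℝ}
    (hp : p ≠ 0)
    (hcontext : Tendsto (fun n : ℕ => cylVisits y k n ω / n) atTop (𝓝 p))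
    (hword : Tendsto (fun n : ℕ => cylVisits y (k + 1) n ω / n) atTop (𝓝 q)) :
    Tendsto (fun n => Bpred D (pref (path D ω) n) (path D ω n) (k + 1))
      (atTop ⊓ 𝓟 (matchTimes ω y k)) (𝓝 (q / p)) := by
  have hsub : Tendsto (fun n => n - k) atTop atTop := tendsto_sub_atTop_nat k
  have hcast : Tendsto (fun n : ℕ => ((n - k : ℕ) : ℝ)) atTop atTop :=
    tendsto_natCast_atTop_atTop.comp hsub
  have hbackoff := tendsto_bdd_div_atTop_nhds_zero
    (Eventually.of_forall fun n => (Bpred_mem_Icc (pref (path D ω) n) (path D ω n) k).1)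
    (Eventually.of_forall fun n => (Bpred_mem_Icc (pref (path D ω) n) (path D ω n) k).2) hcast
  have hratio := tendsto_add_div_add_of_tendsto_div hp (hcast.eventually_ne_atTop 0)
    (hword.comp hsub) (hcontext.comp hsub) hbackoff (hcast.const_div_atTop 1)
  refine (hratio.mono_left inf_le_left).congr' (eventually_inf_principal.2 ?_)
  filter_upwards [eventually_gt_atTop k] with n hk hn
  exact (Bpred_eq_of_mem_matchTimes hk hn).symm

lemma ae_matchTimes_eq_empty {Q : Measure (Omega D)}
    (hQ : Measure.QuasiMeasurePreserving (shiftT D) Q Q) {y : ℕ → Fin D} {k : ℕ}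
    (hnull : Q (cylSet D y k) = 0) : ∀ᵐ ω ∂Q, matchTimes ω y k = ∅ := by
  have hvisit : ∀ᵐ ω ∂Q, ∀ n, (shiftT D)^[n] ω ∉ cylSet D y k :=
    ae_all_iff.2 fun n => (hQ.iterate n).ae (measure_eq_zero_iff_ae_notMem.1 hnull)
  filter_upwards [hvisit] with ω hω
  refine Set.eq_empty_of_forall_notMem fun n hn => hω (n - k) ?_
  exact iterate_shiftT_mem_cylSet_iff.2 fun j hj => hn j (by omega)

lemma ae_tendsto_Bpred_inf_principal_matchTimes {Q : Measure (Omega D)} [IsProbabilityMeasure Q]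
    (hQ : Ergodic (shiftT D) Q) (y : ℕ → Fin D) (k : ℕ) :
    ∀ᵐ ω ∂Q, Tendsto (fun n => Bpred D (pref (path D ω) n) (path D ω n) (k + 1))
      (atTop ⊓ 𝓟 (matchTimes ω y k)) (𝓝 (Qstr D Q y (k + 1) / Qstr D Q y k)) := by
  by_cases hnull : Q (cylSet D y k) = 0
  · filter_upwards [ae_matchTimes_eq_empty
      hQ.toMeasurePreserving.quasiMeasurePreserving hnull] with ω hω
    simp [hω]
  · have hpos : Qstr D Q y k ≠ 0 := ENNReal.toReal_ne_zero.2 ⟨hnull, measure_ne_top _ _⟩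
    filter_upwards [ae_tendsto_cylVisits_div hQ y k, ae_tendsto_cylVisits_div hQ y (k + 1)]
      with ω hcontext hword
    exact tendsto_Bpred_inf_principal_matchTimes hpos hcontext hword

lemma Qstr_div_Qstr_eq_of_mem_matchTimes (Q : Measure (Omega D)) {ω : Omega D} {y : ℕ → Fin D}
    {k n : ℕ} (hn : n ∈ matchTimes ω y k) :
    Qstr D Q (fun i => path D ω (n - k + i)) (k + 1) /
        Qstr D Q (fun i => path D ω (n - k + i)) k =
      Qstr D Q y (k + 1) / Qstr D Q y k := by
  rw [Qstr_congr Q hn, Qstr_congr Q fun j hj => hn j (hj.trans k.lt_succ_self)]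

end Cylinders

/-- Let `Q` be a stationary ergodic probability measure on `Ω = {1,...,D}^ℤ` and
`k ≥ 0`. Then `Q`-almost surely
`lim_{n→∞} [ B(X_{n+1}|X_1^n, k) − Q(X_{n+1} | X_{n+1−k}^{n}) ] = 0`, where
`Q(X_{n+1}|X_{n+1−k}^{n}) = Q(X_{n+1−k}^{n+1})/Q(X_{n+1−k}^{n})` is a ratio of
cylinder probabilities (identified, via stationarity, with cylinder probabilities of
the corresponding strings) evaluated at the sample path. -/
theorem predictor_converges_to_conditional_probability
    (D : ℕ) (hD : 2 ≤ D)
    (Q : Measure (Omega D)) [IsProbabilityMeasure Q]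
    (hQerg : Ergodic (shiftT D) Q) (k : ℕ) :
    ∀ᵐ ω ∂Q,
      Tendsto (fun n : ℕ =>
          Bpred D (pref (path D ω) n) (path D ω n) (k + 1) -
            Qstr D Q (fun i => path D ω (n - k + i)) (k + 1) /
              Qstr D Q (fun i => path D ω (n - k + i)) k)
        atTop (𝓝 0) := by
  -- `Fin.ofNat` reduces modulo `k + 1`, so `wordSeq w` repeats `w` periodically.
  let wordSeq (w : Fin (k + 1) → Fin D) (i : ℕ) : Fin D := w (Fin.ofNat (k + 1) i)
  filter_upwards [ae_all_iff.2 fun w =>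
    ae_tendsto_Bpred_inf_principal_matchTimes hQerg (wordSeq w) k] with ω hω
  let lastWord (n : ℕ) (i : Fin (k + 1)) : Fin D := path D ω (n - k + i)
  have hmatch : ∀ n, n ∈ matchTimes ω (wordSeq (lastWord n)) k := fun n j hj => by
    simp [wordSeq, lastWord, Nat.mod_eq_of_lt hj]
  refine tendsto_of_forall_tendsto_inf_principal_fiber lastWord fun w => ?_
  have hfiber : lastWord ⁻¹' {w} ⊆ matchTimes ω (wordSeq w) k := by
    rintro n rfl
    exact hmatch n
  have hlim := (hω w).mono_left (inf_le_inf_left atTop (principal_mono.2 hfiber))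
  refine (tendsto_sub_nhds_zero_iff.2 hlim).congr' (eventually_inf_principal.2 ?_)
  filter_upwards with n hn
  rw [Qstr_div_Qstr_eq_of_mem_matchTimes Q (hfiber hn)]
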